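/- arXiv:2004.07344 — 6 statements merged into one kernel-verified Lean document; each statement's English description precedes it below -/
import Mathlib

section
/- Let ρ, K > 0, D ≥ 0, ε ≥ 0 and λ > 0 be real numbers, set η = 1 + ε/λ², and assume K/(ρε + ρλ²) − D²/(4ρ²λ⁴) > 0. Let ω > 0 and γ ∈ ℝ. Then the Kramers–Kronig relations ρ η (ω² − γ²) = K/λ² − D η γ/λ² and 2 ρ γ = D/λ² hold if and only if γ = D/(2ρλ²) and ω = sqrt( K/(ρε + ρλ²) − D²/(4ρ²λ⁴) ); in that case the phase velocity v = ωλ satisfies v = sqrt( K/(ρ(1 + ε/λ²)) − D²/(4ρ²λ²) ). -/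
/-!
The second relation reads `D / λ² = 2ργ`, so the damping term `D η γ / λ²` of the first equals
`2ρη γ²`. The first relation therefore becomes `ρη (ω² + γ²) = K / λ²`, that is,
`ω² = K / (ρηλ²) - γ²`. Since `ω > 0`, taking the square root, before or after multiplying by `λ²`,
gives the angular frequency and the phase velocity.
-/

/-- The Kramers–Kronig relations: the real and imaginary parts of the dispersion condition at the
complex angular frequency `ω + iγ`. The factor `η` is a free parameter here; the model with
Sobolev-type regularization has `η = 1 + ε / lam ^ 2`. -/
def KramersKronigRelations {F : Type*} [Field F] (ρ K D lam η ω γ : F) : Prop :=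
  ρ * η * (ω ^ 2 - γ ^ 2) = K / lam ^ 2 - D * η * γ / lam ^ 2 ∧ 2 * ρ * γ = D / lam ^ 2

namespace KramersKronigRelations

variable {F : Type*} [Field F] {ρ K D lam η ω γ : F}

theorem iff_sq_eq (hρ : ρ ≠ 0) (hη : η ≠ 0) :
    KramersKronigRelations ρ K D lam η ω γ ↔
      2 * ρ * γ = D / lam ^ 2 ∧ ω ^ 2 = K / (ρ * η * lam ^ 2) - γ ^ 2 := by
  rw [KramersKronigRelations, and_comm]
  refine and_congr_right fun hγ ↦ ?_
  have damping : D * η * γ / lam ^ 2 = ρ * η * (2 * γ ^ 2) := by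
    calc D * η * γ / lam ^ 2 = D / lam ^ 2 * (η * γ) := by ring
      _ = ρ * η * (2 * γ ^ 2) := by rw [← hγ]; ring
  calc ρ * η * (ω ^ 2 - γ ^ 2) = K / lam ^ 2 - D * η * γ / lam ^ 2
      ↔ (ω ^ 2 + γ ^ 2) * (ρ * η) = K / lam ^ 2 := by
        rw [damping, eq_sub_iff_add_eq]; ring_nf
    _ ↔ ω ^ 2 = K / (ρ * η * lam ^ 2) - γ ^ 2 := by
        rw [← eq_div_iff (mul_ne_zero hρ hη), div_div, mul_comm (lam ^ 2), eq_sub_iff_add_eq]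

theorem attenuation_eq_iff [NeZero (2 : F)] (hρ : ρ ≠ 0) :
    2 * ρ * γ = D / lam ^ 2 ↔ γ = D / (2 * ρ * lam ^ 2) := by
  rw [mul_comm (2 * ρ) γ, ← eq_div_iff (mul_ne_zero two_ne_zero hρ), div_div, mul_comm (lam ^ 2)]

theorem iff_attenuation_eq_and_sq_eq [NeZero (2 : F)] (hρ : ρ ≠ 0) (hη : η ≠ 0) :
    KramersKronigRelations ρ K D lam η ω γ ↔
      γ = D / (2 * ρ * lam ^ 2) ∧
        ω ^ 2 = K / (ρ * η * lam ^ 2) - D ^ 2 / (4 * ρ ^ 2 * lam ^ 4) := by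
  rw [iff_sq_eq hρ hη, attenuation_eq_iff hρ]
  refine and_congr_right fun hγ ↦ ?_
  have γ_sq : γ ^ 2 = D ^ 2 / (4 * ρ ^ 2 * lam ^ 4) := by
    rw [hγ, div_pow]; ring_nf
  rw [γ_sq]

theorem phaseVelocity_sq [NeZero (2 : F)] (hρ : ρ ≠ 0) (hη : η ≠ 0) (hlam : lam ≠ 0)
    (h : KramersKronigRelations ρ K D lam η ω γ) :
    (ω * lam) ^ 2 = K / (ρ * η) - D ^ 2 / (4 * ρ ^ 2 * lam ^ 2) := by
  obtain ⟨-, ω_sq⟩ := (iff_attenuation_eq_and_sq_eq hρ hη).mp h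
  calc (ω * lam) ^ 2
      = K / (ρ * η * lam ^ 2) * lam ^ 2 - D ^ 2 / (4 * ρ ^ 2 * lam ^ 2 * lam ^ 2) * lam ^ 2 := by
        rw [mul_pow, ω_sq]; ring
    _ = K / (ρ * η) - D ^ 2 / (4 * ρ ^ 2 * lam ^ 2) := by
        simp only [← div_div _ _ (lam ^ 2), div_mul_cancel₀ _ (pow_ne_zero 2 hlam)]

end KramersKronigRelations

theorem sq_eq_iff_pos_and_eq_sqrt {x y : ℝ} (hx : 0 < x) : x ^ 2 = y ↔ 0 < y ∧ x = √y := by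
  constructor
  · rintro rfl
    exact ⟨pow_pos hx 2, (Real.sqrt_sq hx.le).symm⟩
  · rintro ⟨hy, rfl⟩
    exact Real.sq_sqrt hy.le

theorem stmt8_general (ρ K D ε lam η ω γ : ℝ)
    (hρ : ρ ≠ 0) (hlam : 0 < lam) (hη : η = 1 + ε / lam ^ 2) (hη₀ : η ≠ 0) (hω : 0 < ω) :
    (KramersKronigRelations ρ K D lam η ω γ
      ↔ (γ = D / (2 * ρ * lam ^ 2)
        ∧ 0 < K / (ρ * ε + ρ * lam ^ 2) - D ^ 2 / (4 * ρ ^ 2 * lam ^ 4)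
        ∧ ω = √(K / (ρ * ε + ρ * lam ^ 2) - D ^ 2 / (4 * ρ ^ 2 * lam ^ 4))))
    ∧ (KramersKronigRelations ρ K D lam η ω γ
      → ω * lam = √(K / (ρ * (1 + ε / lam ^ 2)) - D ^ 2 / (4 * ρ ^ 2 * lam ^ 2))) := by
  have denom_eq : ρ * η * lam ^ 2 = ρ * ε + ρ * lam ^ 2 := by
    rw [hη]; field_simp; ring
  constructor
  · rw [KramersKronigRelations.iff_attenuation_eq_and_sq_eq hρ hη₀, denom_eq,
      sq_eq_iff_pos_and_eq_sqrt hω]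
  · intro h
    rw [← hη, ← h.phaseVelocity_sq hρ hη₀ hlam.ne', Real.sqrt_sq (mul_pos hω hlam).le]

/-- Under the positivity assumption, the Kramers–Kronig relations
hold iff `γ = D/(2ρλ²)` and `ω = sqrt(K/(ρε + ρλ²) − D²/(4ρ²λ⁴))`; in that case the
phase velocity `v = ωλ` equals `sqrt(K/(ρ(1 + ε/λ²)) − D²/(4ρ²λ²))`. -/
theorem stmt8 (ρ K D ε lam η ω γ : ℝ)
    (hρ : 0 < ρ) (hK : 0 < K) (hD : 0 ≤ D) (hε : 0 ≤ ε) (hlam : 0 < lam)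
    (hη : η = 1 + ε / lam ^ 2)
    (hpos : 0 < K / (ρ * ε + ρ * lam ^ 2) - D ^ 2 / (4 * ρ ^ 2 * lam ^ 4))
    (hω : 0 < ω) :
    ((ρ * η * (ω ^ 2 - γ ^ 2) = K / lam ^ 2 - D * η * γ / lam ^ 2
        ∧ 2 * ρ * γ = D / lam ^ 2)
      ↔ (γ = D / (2 * ρ * lam ^ 2)
        ∧ ω = Real.sqrt (K / (ρ * ε + ρ * lam ^ 2) - D ^ 2 / (4 * ρ ^ 2 * lam ^ 4))))
    ∧ ((ρ * η * (ω ^ 2 - γ ^ 2) = K / lam ^ 2 - D * η * γ / lam ^ 2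
        ∧ 2 * ρ * γ = D / lam ^ 2)
      → ω * lam = Real.sqrt (K / (ρ * (1 + ε / lam ^ 2)) - D ^ 2 / (4 * ρ ^ 2 * lam ^ 2))) := by
  have hη₀ : η ≠ 0 := by rw [hη]; positivity
  simpa only [KramersKronigRelations, hpos, true_and] using
    stmt8_general ρ K D ε lam η ω γ hρ.ne' hlam hη hη₀ hω
end

section
/- Let ρ, K > 0 and ε ≥ 0, D ≥ 0 with ε + D > 0. Then the function λ ↦ K/(ρ(1 + ε/λ²)) − D²/(4ρ²λ²) is strictly increasing on the interval (0, ∞). (Hence the wave speed v(λ) = sqrt( K/(ρ(1+ε/λ²)) − D²/(4ρ²λ²) ) exhibits normal dispersion: longer waves propagate faster, wherever the expression under the square root is positive.) -/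
/-
With `s = λ²`, `c = K/ρ` and `d = D²/(4ρ²)`, the squared phase velocity is `c/(1 + ε/s) - d/s`,
whose slope between `s` and `t` is `(c ε s t + d (s + ε)(t + ε)) / (s t (s + ε)(t + ε))`. Since
`s t ≤ (s + ε)(t + ε)`, the numerator is at least `(c ε + d) s t`, which has the sign of
`4 ρ K ε + D²`.
-/

open Set

theorem div_one_add_div_sub_div_sub_eq {𝕜 : Type*} [Field 𝕜] (c d : 𝕜) {ε s t : 𝕜}
    (hs : s ≠ 0) (ht : t ≠ 0) (hsε : s + ε ≠ 0) (htε : t + ε ≠ 0) :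
    (c / (1 + ε / t) - d / t) - (c / (1 + ε / s) - d / s) =
      (t - s) * (c * ε * (s * t) + d * ((s + ε) * (t + ε))) /
        (s * t * ((s + ε) * (t + ε))) := by
  rw [one_add_div hs, one_add_div ht]
  field_simp
  ring

section LinearOrderedField

variable {𝕜 : Type*} [Field 𝕜] [LinearOrder 𝕜] [IsStrictOrderedRing 𝕜]

theorem strictMonoOn_div_one_add_div_sub_div {c d ε : 𝕜} (hε : 0 ≤ ε) (hd : 0 ≤ d)
    (hcd : 0 < c * ε + d) :
    StrictMonoOn (fun s : 𝕜 => c / (1 + ε / s) - d / s) (Ioi 0) := by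
  intro s (hs : 0 < s) t (ht : 0 < t) hst
  have hsε : 0 < s + ε := by positivity
  have htε : 0 < t + ε := by positivity
  have numerator_pos : 0 < c * ε * (s * t) + d * ((s + ε) * (t + ε)) :=
    calc 0 < (c * ε + d) * (s * t) := by positivity
      _ = c * ε * (s * t) + d * (s * t) := add_mul ..
      _ ≤ c * ε * (s * t) + d * ((s + ε) * (t + ε)) := by
        gcongr <;> exact le_add_of_nonneg_right hε
  rw [← sub_pos, div_one_add_div_sub_div_sub_eq c d hs.ne' ht.ne' hsε.ne' htε.ne']
  exact div_pos (mul_pos (sub_pos.mpr hst) numerator_pos) (by positivity)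

theorem mul_add_sq_pos_of_add_pos {k x y : 𝕜} (hk : 0 < k) (hx : 0 ≤ x) (hxy : 0 < x + y) :
    0 < k * x + y ^ 2 := by
  rcases hx.eq_or_lt with rfl | hx
  · rw [zero_add] at hxy
    positivity
  · positivity

theorem stmt9_general {ρ K ε D : 𝕜} (hρ : ρ ≠ 0) (hε : 0 ≤ ε)
    (hpos : 0 < 4 * ρ * K * ε + D ^ 2) :
    StrictMonoOn (fun lam : 𝕜 =>
      K / (ρ * (1 + ε / lam ^ 2)) - D ^ 2 / (4 * ρ ^ 2 * lam ^ 2)) (Ioi 0) := by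
  have coeff_pos : 0 < K / ρ * ε + D ^ 2 / (4 * ρ ^ 2) := by
    have : K / ρ * ε + D ^ 2 / (4 * ρ ^ 2) = (4 * ρ * K * ε + D ^ 2) / (4 * ρ ^ 2) := by
      field_simp
    rw [this]
    positivity
  have sq_strictMonoOn : StrictMonoOn (fun lam : 𝕜 => lam ^ 2) (Ioi 0) :=
    (pow_left_strictMonoOn₀ two_ne_zero).mono fun _ => le_of_lt
  simpa only [Function.comp_def, div_div] using
    (strictMonoOn_div_one_add_div_sub_div hε (by positivity) coeff_pos).comp sq_strictMonoOn
      fun _ => pow_pos (n := 2)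

end LinearOrderedField

/-- For `ρ, K > 0`, `ε, D ≥ 0` with `ε + D > 0`, the squared phase
velocity `λ ↦ K/(ρ(1 + ε/λ²)) − D²/(4ρ²λ²)` is strictly increasing on `(0, ∞)`
(normal dispersion). -/
theorem stmt9 (ρ K ε D : ℝ) (hρ : 0 < ρ) (hK : 0 < K) (hε : 0 ≤ ε) (hD : 0 ≤ D)
    (hεD : 0 < ε + D) :
    StrictMonoOn (fun lam : ℝ =>
      K / (ρ * (1 + ε / lam ^ 2)) - D ^ 2 / (4 * ρ ^ 2 * lam ^ 2)) (Set.Ioi 0) :=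
  stmt9_general hρ.ne' hε (mul_add_sq_pos_of_add_pos (by positivity) hε hεD)
end

section
/- Let ρ, K, D > 0 and ε ≥ 0 be real numbers. Then there exists a unique λ_c > 0 such that 4 ρ K λ_c⁴ − D² λ_c² − ε D² = 0; moreover, for every λ > 0 one has K/(ρ(1 + ε/λ²)) − D²/(4ρ²λ²) > 0 if and only if λ > λ_c. (Thus waves of length λ ≤ λ_c cannot propagate, while waves of length λ > λ_c have a well-defined positive speed.) -/
/-!
Multiplied by `4 * ρ ^ 2 * x ^ 2 * (x ^ 2 + ε) > 0`, the squared phase velocity at wavelength `x`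
becomes the biquadratic `a * x ^ 4 - b * x ^ 2 - c` with `a = 4 * ρ * K`, `b = D ^ 2` and
`c = ε * D ^ 2`. If `r` is a root, eliminating `b` gives
`r ^ 2 * (a * x ^ 4 - b * x ^ 2 - c) = (x ^ 2 - r ^ 2) * (a * r ^ 2 * x ^ 2 + c)`,
whose last factor is positive, so for `r, x > 0` the biquadratic has the sign of `x - r`.
-/

section Biquadratic

theorem sq_mul_biquadratic_of_root {R : Type*} [CommRing R] {a b c r : R}
    (hr : a * r ^ 4 - b * r ^ 2 - c = 0) (x : R) :
    r ^ 2 * (a * x ^ 4 - b * x ^ 2 - c) = (x ^ 2 - r ^ 2) * (a * r ^ 2 * x ^ 2 + c) := by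
  linear_combination x ^ 2 * hr

variable {R : Type*} [CommRing R] [LinearOrder R] [IsStrictOrderedRing R] {a b c r x : R}

theorem biquadratic_pos_iff_root_lt (ha : 0 < a) (hc : 0 ≤ c) (hr₀ : 0 < r)
    (hr : a * r ^ 4 - b * r ^ 2 - c = 0) (hx : 0 < x) :
    0 < a * x ^ 4 - b * x ^ 2 - c ↔ r < x := by
  have hfactor : 0 < a * r ^ 2 * x ^ 2 + c := by positivity
  rw [← mul_pos_iff_of_pos_left (pow_pos hr₀ 2), sq_mul_biquadratic_of_root hr,
    mul_pos_iff_of_pos_right hfactor, sub_pos, sq_lt_sq₀ hr₀.le hx.le]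

theorem eq_of_pos_biquadratic_roots (ha : 0 < a) (hc : 0 ≤ c)
    (hr₀ : 0 < r) (hr : a * r ^ 4 - b * r ^ 2 - c = 0)
    (hx₀ : 0 < x) (hx : a * x ^ 4 - b * x ^ 2 - c = 0) : x = r := by
  have hle : x ≤ r := not_lt.1 <|
    (biquadratic_pos_iff_root_lt ha hc hr₀ hr hx₀).not.1 hx.not_gt
  have hge : r ≤ x := not_lt.1 <|
    (biquadratic_pos_iff_root_lt ha hc hx₀ hx hr₀).not.1 hr.not_gt
  exact hle.antisymm hge

end Biquadratic

section Existence

variable {a b c : ℝ}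

theorem exists_pos_quadratic_root (ha : 0 < a) (hb : 0 < b) (hc : 0 ≤ c) :
    ∃ s : ℝ, 0 < s ∧ a * s ^ 2 - b * s - c = 0 := by
  have hdiscrim : discrim a (-b) (-c) = √(b ^ 2 + 4 * a * c) * √(b ^ 2 + 4 * a * c) := by
    rw [Real.mul_self_sqrt (by positivity), discrim]
    ring
  have hroot := (quadratic_eq_zero_iff ha.ne' hdiscrim _).2 (Or.inl rfl)
  refine ⟨(- -b + √(b ^ 2 + 4 * a * c)) / (2 * a), ?_, by linear_combination hroot⟩
  rw [neg_neg]
  positivity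

theorem exists_pos_biquadratic_root (ha : 0 < a) (hb : 0 < b) (hc : 0 ≤ c) :
    ∃ r : ℝ, 0 < r ∧ a * r ^ 4 - b * r ^ 2 - c = 0 := by
  obtain ⟨s, hs₀, hs⟩ := exists_pos_quadratic_root ha hb hc
  refine ⟨√s, Real.sqrt_pos.2 hs₀, ?_⟩
  rwa [pow_mul (√s) 2 2, Real.sq_sqrt hs₀.le]

end Existence

section PhaseVelocity

/-- The squared phase velocity of a sinusoidal pressure wave of wavelength `lam` in a medium of mass
density `ρ`, elastic bulk modulus `K` and viscosity coefficient `D`, where `ε = K / H` is the ratio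
of `K` to the hyper-modulus `H`. It is a formal expression rather than the square of a real
number: it is nonpositive for wavelengths that cannot propagate. -/
noncomputable def phaseVelocitySq (ρ K D ε lam : ℝ) : ℝ :=
  K / (ρ * (1 + ε / lam ^ 2)) - D ^ 2 / (4 * ρ ^ 2 * lam ^ 2)

variable {ρ ε lam : ℝ}

theorem phaseVelocitySq_eq_div (K D : ℝ) (hρ : ρ ≠ 0) (hlam : lam ≠ 0) (hε : lam ^ 2 + ε ≠ 0) :
    phaseVelocitySq ρ K D ε lam =
      (4 * ρ * K * lam ^ 4 - D ^ 2 * lam ^ 2 - ε * D ^ 2) /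
        (4 * ρ ^ 2 * lam ^ 2 * (lam ^ 2 + ε)) := by
  have hsum : 1 + ε / lam ^ 2 = (lam ^ 2 + ε) / lam ^ 2 := by field_simp
  rw [phaseVelocitySq, hsum]
  field_simp
  ring

theorem phaseVelocitySq_pos_iff (K D : ℝ) (hρ : ρ ≠ 0) (hlam : lam ≠ 0) (hε : 0 < lam ^ 2 + ε) :
    0 < phaseVelocitySq ρ K D ε lam ↔
      0 < 4 * ρ * K * lam ^ 4 - D ^ 2 * lam ^ 2 - ε * D ^ 2 := by
  rw [phaseVelocitySq_eq_div K D hρ hlam hε.ne', div_pos_iff_of_pos_right (by positivity)]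

end PhaseVelocity

/-- For `ρ, K, D > 0` and `ε ≥ 0` there is a unique `λ_c > 0` with
`4ρKλ_c⁴ − D²λ_c² − εD² = 0`, and for every `λ > 0` the squared phase velocity
`K/(ρ(1 + ε/λ²)) − D²/(4ρ²λ²)` is positive iff `λ > λ_c`. -/
theorem stmt10 (ρ K D ε : ℝ) (hρ : 0 < ρ) (hK : 0 < K) (hD : 0 < D) (hε : 0 ≤ ε) :
    ∃ lamc : ℝ, (0 < lamc ∧ 4 * ρ * K * lamc ^ 4 - D ^ 2 * lamc ^ 2 - ε * D ^ 2 = 0)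
      ∧ (∀ lamc' : ℝ,
          (0 < lamc' ∧ 4 * ρ * K * lamc' ^ 4 - D ^ 2 * lamc' ^ 2 - ε * D ^ 2 = 0)
          → lamc' = lamc)
      ∧ (∀ lam : ℝ, 0 < lam →
          (0 < K / (ρ * (1 + ε / lam ^ 2)) - D ^ 2 / (4 * ρ ^ 2 * lam ^ 2)
            ↔ lamc < lam)) := by
  have ha : 0 < 4 * ρ * K := by positivity
  have hb : 0 < D ^ 2 := by positivity
  have hc : 0 ≤ ε * D ^ 2 := by positivity
  obtain ⟨lamc, hlamc, hroot⟩ := exists_pos_biquadratic_root ha hb hc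
  refine ⟨lamc, ⟨hlamc, hroot⟩, ?_, fun lam hlam => ?_⟩
  · rintro lamc' ⟨hlamc', hroot'⟩
    exact eq_of_pos_biquadratic_roots ha hc hlamc hroot hlamc' hroot'
  · exact (phaseVelocitySq_pos_iff K D hρ.ne' hlam.ne' (by positivity)).trans
      (biquadratic_pos_iff_root_lt ha hc hlamc hroot hlam)
end

section
/- Let ρ, K > 0, D ≥ 0, ℓ ≥ 0 and λ > 0 be real numbers, and assume K/ρ + ℓ²K/(ρλ²) − D²/(4ρ²λ²) > 0. Let ω > 0 and γ ∈ ℝ. Then the Kramers–Kronig relations ρ(ω² − γ²) = K/λ² + ℓ²K/λ⁴ − Dγ/λ² and 2ργ = D/λ² hold if and only if γ = D/(2ρλ²) and the phase velocity v = ωλ satisfies v = sqrt( K/ρ + ℓ²K/(ρλ²) − D²/(4ρ²λ²) ). -/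
/-!
For a fixed wavelength the Kramers–Kronig relations are those of a damped oscillator with mass `ρ`,
stiffness `κ = K/λ² + ℓ²K/λ⁴` and damping `δ = D/λ²`: the second one gives `γ = δ/(2ρ)`, which turns
the first into `ω² = κ/ρ - γ²`. Multiplying by `λ²` gives the square of the phase velocity.
-/

section Field

variable {F : Type*} [Field F] [NeZero (2 : F)]

theorem dampedOscillator_iff_sq_frequency_eq {ρ : F} (hρ : ρ ≠ 0) (κ δ ω γ : F) :
    (ρ * (ω ^ 2 - γ ^ 2) = κ - δ * γ ∧ 2 * ρ * γ = δ)
      ↔ (γ = δ / (2 * ρ) ∧ ω ^ 2 = κ / ρ - (δ / (2 * ρ)) ^ 2) := by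
  have attenuation_iff : 2 * ρ * γ = δ ↔ γ = δ / (2 * ρ) := by
    rw [eq_div_iff (mul_ne_zero two_ne_zero hρ), mul_comm]
  rw [and_comm, attenuation_iff]
  refine and_congr_right fun hγ => ?_
  rw [← hγ, ← attenuation_iff.mpr hγ, eq_sub_iff_add_eq (a := ω ^ 2), eq_div_iff hρ]
  constructor <;> intro h <;> linear_combination h

theorem kramersKronig_iff_sq_phaseVelocity_eq {ρ lam : F} (hρ : ρ ≠ 0) (hlam : lam ≠ 0)
    (K D ℓ ω γ : F) :
    (ρ * (ω ^ 2 - γ ^ 2) = K / lam ^ 2 + ℓ ^ 2 * K / lam ^ 4 - D * γ / lam ^ 2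
        ∧ 2 * ρ * γ = D / lam ^ 2)
      ↔ (γ = D / (2 * ρ * lam ^ 2)
        ∧ (ω * lam) ^ 2 = K / ρ + ℓ ^ 2 * K / (ρ * lam ^ 2)
            - D ^ 2 / (4 * ρ ^ 2 * lam ^ 2)) := by
  have attenuation_eq : D / lam ^ 2 / (2 * ρ) = D / (2 * ρ * lam ^ 2) := by
    rw [div_div, mul_comm]
  have sq_velocity_eq :
      ((K / lam ^ 2 + ℓ ^ 2 * K / lam ^ 4) / ρ - (D / (2 * ρ * lam ^ 2)) ^ 2) * lam ^ 2
        = K / ρ + ℓ ^ 2 * K / (ρ * lam ^ 2) - D ^ 2 / (4 * ρ ^ 2 * lam ^ 2) := by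
    rw [show (4 : F) = 2 ^ 2 by norm_num]
    field_simp
  rw [mul_div_right_comm D γ, dampedOscillator_iff_sq_frequency_eq hρ, attenuation_eq, mul_pow,
    ← sq_velocity_eq, mul_left_inj' (pow_ne_zero 2 hlam)]

end Field

theorem stmt13_general {ρ K D ℓ lam ω γ : ℝ} (hρ : ρ ≠ 0) (hlam : lam ≠ 0)
    (hnonneg : 0 ≤ K / ρ + ℓ ^ 2 * K / (ρ * lam ^ 2) - D ^ 2 / (4 * ρ ^ 2 * lam ^ 2))
    (hv : 0 ≤ ω * lam) :
    (ρ * (ω ^ 2 - γ ^ 2) = K / lam ^ 2 + ℓ ^ 2 * K / lam ^ 4 - D * γ / lam ^ 2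
        ∧ 2 * ρ * γ = D / lam ^ 2)
    ↔ (γ = D / (2 * ρ * lam ^ 2)
        ∧ ω * lam = Real.sqrt (K / ρ + ℓ ^ 2 * K / (ρ * lam ^ 2)
            - D ^ 2 / (4 * ρ ^ 2 * lam ^ 2))) := by
  rw [kramersKronig_iff_sq_phaseVelocity_eq hρ hlam, eq_comm (a := ω * lam),
    Real.sqrt_eq_iff_eq_sq hnonneg hv, eq_comm (a := (ω * lam) ^ 2)]

/-- Under the positivity assumption, the Kramers–Kronig relations
`ρ(ω² − γ²) = K/λ² + ℓ²K/λ⁴ − Dγ/λ²` and `2ργ = D/λ²` hold iff `γ = D/(2ρλ²)` and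
the phase velocity `v = ωλ` equals `sqrt(K/ρ + ℓ²K/(ρλ²) − D²/(4ρ²λ²))`. -/
theorem stmt13 (ρ K D ℓ lam ω γ : ℝ)
    (hρ : 0 < ρ) (hK : 0 < K) (hD : 0 ≤ D) (hℓ : 0 ≤ ℓ) (hlam : 0 < lam)
    (hpos : 0 < K / ρ + ℓ ^ 2 * K / (ρ * lam ^ 2) - D ^ 2 / (4 * ρ ^ 2 * lam ^ 2))
    (hω : 0 < ω) :
    (ρ * (ω ^ 2 - γ ^ 2) = K / lam ^ 2 + ℓ ^ 2 * K / lam ^ 4 - D * γ / lam ^ 2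
        ∧ 2 * ρ * γ = D / lam ^ 2)
    ↔ (γ = D / (2 * ρ * lam ^ 2)
        ∧ ω * lam = Real.sqrt (K / ρ + ℓ ^ 2 * K / (ρ * lam ^ 2)
            - D ^ 2 / (4 * ρ ^ 2 * lam ^ 2))) :=
  stmt13_general hρ.ne' hlam.ne' hpos.le (mul_pos hω hlam).le
end

section
/- Let ρ, D, K, H > 0 be constants and set ε = K/H. Let u, v, π : ℝ × ℝ → ℝ be smooth (C^∞) functions of (t,x) satisfying, at every point, ∂ₜu = v, the momentum equation ρ ∂ₜv − D ∂ₓ²v + ∂ₓπ = 0, and the Oskolkov-regularized constraint (1/K)∂ₜπ + ∂ₓv = (1/H)∂ₓ²π. Then at every point ∂ₜ[ ρ ∂ₜ²u − (D + ερ) ∂ₜ∂ₓ²u − K ∂ₓ²u + ε D ∂ₓ⁴u ] = 0, i.e. u satisfies the time derivative of the parabolic dispersive equation ρ ∂ₜ²u − (D+ερ) ∂ₜ∂ₓ²u − K ∂ₓ²u + εD ∂ₓ⁴u = 0. -/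
/-- partial derivative in the first (time) variable -/
noncomputable def pt (f : ℝ × ℝ → ℝ) (p : ℝ × ℝ) : ℝ := deriv (fun s => f (s, p.2)) p.1

/-- partial derivative in the second (space) variable -/
noncomputable def px (f : ℝ × ℝ → ℝ) (p : ℝ × ℝ) : ℝ := deriv (fun y => f (p.1, y)) p.2

/-!
The momentum equation says that `w = D ∂ₓ²u - ρ ∂ₜu` satisfies `∂ₜw = ∂ₓπ`. In terms of `w` and
the heat operator `L = ∂ₜ - ε ∂ₓ²`, the dispersive expression is `-K ∂ₓ²u - L w`. Since `L` commutes
with `∂ₜ` and `∂ₓ`, its time derivative is `-K ∂ₓ²v - ∂ₓ(L π)`, and this vanishes because the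
constraint, multiplied by `K`, reads `L π = -K ∂ₓv`.
-/

section SecondDerivative

variable {E F : Type*} [NormedAddCommGroup E] [NormedSpace ℝ E]
  [NormedAddCommGroup F] [NormedSpace ℝ F]

theorem fderiv_fderiv_apply_comm {f : E → F} {x : E} (hf : ContDiffAt ℝ 2 f x) (v w : E) :
    fderiv ℝ (fun y => fderiv ℝ f y v) x w = fderiv ℝ (fun y => fderiv ℝ f y w) x v := by
  have hf' : DifferentiableAt ℝ (fderiv ℝ f) x :=
    (hf.fderiv_right (m := 1) (by norm_num)).differentiableAt one_ne_zero
  have hsymm : IsSymmSndFDerivAt ℝ f x := hf.isSymmSndFDerivAt (by simp)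
  rw [fderiv_clm_apply hf' (differentiableAt_const v),
    fderiv_clm_apply hf' (differentiableAt_const w)]
  simpa using hsymm w v

end SecondDerivative

section PartialDerivatives

variable {f g : ℝ × ℝ → ℝ} {m n : WithTop ℕ∞}

theorem pt_eq_fderiv {p : ℝ × ℝ} (hf : DifferentiableAt ℝ f p) :
    pt f p = fderiv ℝ f p (1, 0) := by
  have hline : HasDerivAt (fun s : ℝ => (s, p.2)) ((1 : ℝ), (0 : ℝ)) p.1 :=
    (hasDerivAt_id p.1).prodMk (hasDerivAt_const p.1 p.2)
  exact (hf.hasFDerivAt.comp_hasDerivAt p.1 hline).deriv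

theorem px_eq_fderiv {p : ℝ × ℝ} (hf : DifferentiableAt ℝ f p) :
    px f p = fderiv ℝ f p (0, 1) := by
  have hline : HasDerivAt (fun y : ℝ => (p.1, y)) ((0 : ℝ), (1 : ℝ)) p.2 :=
    (hasDerivAt_const p.2 p.1).prodMk (hasDerivAt_id p.2)
  exact (hf.hasFDerivAt.comp_hasDerivAt p.2 hline).deriv

theorem contDiff_pt (hf : ContDiff ℝ n f) (hmn : m + 1 ≤ n := by norm_num) :
    ContDiff ℝ m (pt f) := by
  have hdf : Differentiable ℝ f := (hf.of_le (le_add_self.trans hmn)).differentiable one_ne_zero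
  have hpt : pt f = fun p => fderiv ℝ f p (1, 0) := funext fun p => pt_eq_fderiv (hdf p)
  rw [hpt]
  exact (hf.fderiv_right hmn).clm_apply contDiff_const

theorem contDiff_px (hf : ContDiff ℝ n f) (hmn : m + 1 ≤ n := by norm_num) :
    ContDiff ℝ m (px f) := by
  have hdf : Differentiable ℝ f := (hf.of_le (le_add_self.trans hmn)).differentiable one_ne_zero
  have hpx : px f = fun p => fderiv ℝ f p (0, 1) := funext fun p => px_eq_fderiv (hdf p)
  rw [hpx]
  exact (hf.fderiv_right hmn).clm_apply contDiff_const

theorem differentiable_pt (hf : ContDiff ℝ n f) (hn : 2 ≤ n := by norm_num) :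
    Differentiable ℝ (pt f) :=
  (contDiff_pt (m := 1) hf (by rwa [one_add_one_eq_two])).differentiable one_ne_zero

theorem differentiable_px (hf : ContDiff ℝ n f) (hn : 2 ≤ n := by norm_num) :
    Differentiable ℝ (px f) :=
  (contDiff_px (m := 1) hf (by rwa [one_add_one_eq_two])).differentiable one_ne_zero

theorem pt_px_comm (hf : ContDiff ℝ n f) (hn : 2 ≤ n := by norm_num) :
    pt (px f) = px (pt f) := by
  have hf₂ : ContDiff ℝ 2 f := hf.of_le hn
  have hdf : Differentiable ℝ f := hf₂.differentiable two_ne_zero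
  have hpt : pt f = fun p => fderiv ℝ f p (1, 0) := funext fun p => pt_eq_fderiv (hdf p)
  have hpx : px f = fun p => fderiv ℝ f p (0, 1) := funext fun p => px_eq_fderiv (hdf p)
  ext p
  rw [pt_eq_fderiv (differentiable_px hf₂).differentiableAt,
    px_eq_fderiv (differentiable_pt hf₂).differentiableAt, hpt, hpx]
  exact fderiv_fderiv_apply_comm hf₂.contDiffAt (0, 1) (1, 0)

theorem pt_px_px_comm (hf : ContDiff ℝ n f) (hn : 3 ≤ n := by norm_num) :
    pt (px (px f)) = px (px (pt f)) := by
  have hf₃ : ContDiff ℝ 3 f := hf.of_le hn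
  have hpx : ContDiff ℝ 2 (px f) := contDiff_px hf₃
  rw [pt_px_comm hpx, pt_px_comm hf₃]

theorem pt_const_smul (c : ℝ) (f : ℝ × ℝ → ℝ) : pt (c • f) = c • pt f := by
  ext p
  exact deriv_const_mul_field c

theorem px_const_smul (c : ℝ) (f : ℝ × ℝ → ℝ) : px (c • f) = c • px f := by
  ext p
  exact deriv_const_mul_field c

theorem pt_sub (hf : Differentiable ℝ f) (hg : Differentiable ℝ g) :
    pt (f - g) = pt f - pt g := by
  ext p
  rw [Pi.sub_apply, pt_eq_fderiv (hf.sub hg p), pt_eq_fderiv (hf p), pt_eq_fderiv (hg p),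
    fderiv_sub (hf p) (hg p), sub_apply]

theorem px_sub (hf : Differentiable ℝ f) (hg : Differentiable ℝ g) :
    px (f - g) = px f - px g := by
  ext p
  rw [Pi.sub_apply, px_eq_fderiv (hf.sub hg p), px_eq_fderiv (hf p), px_eq_fderiv (hg p),
    fderiv_sub (hf p) (hg p), sub_apply]

end PartialDerivatives

/-- The heat operator `∂ₜ - ε ∂ₓ²`, which acts on the pressure in the regularized constraint. -/
noncomputable def heatOp (ε : ℝ) (f : ℝ × ℝ → ℝ) : ℝ × ℝ → ℝ :=
  pt f - ε • px (px f)

/-- The momentum potential `D ∂ₓ²u - ρ ∂ₜu`: the momentum equation says that its time derivative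
is the pressure gradient. -/
noncomputable def momentumPotential (ρ D : ℝ) (u : ℝ × ℝ → ℝ) : ℝ × ℝ → ℝ :=
  D • px (px u) - ρ • pt u

/-- The left-hand side of the parabolic dispersive equation for `u`. -/
noncomputable def parabolicDispersiveOp (ρ D K ε : ℝ) (u : ℝ × ℝ → ℝ) : ℝ × ℝ → ℝ := fun q =>
  ρ * pt (pt u) q - (D + ε * ρ) * pt (px (px u)) q - K * px (px u) q + ε * D * px (px (px (px u))) q

section HeatOperator

variable {f : ℝ × ℝ → ℝ}

theorem contDiff_heatOp {m n : WithTop ℕ∞} (ε : ℝ) (hf : ContDiff ℝ n f)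
    (hmn : m + 2 ≤ n := by norm_num) : ContDiff ℝ m (heatOp ε f) := by
  have hmn' : m + 1 + 1 ≤ n := by rwa [add_assoc, one_add_one_eq_two]
  have hpx : ContDiff ℝ m (px (px f)) := contDiff_px (contDiff_px hf hmn') le_rfl
  exact (contDiff_pt hf (le_self_add.trans hmn')).sub (hpx.const_smul ε)

theorem pt_heatOp (ε : ℝ) (hf : ContDiff ℝ 3 f) : pt (heatOp ε f) = heatOp ε (pt f) := by
  have hpx : ContDiff ℝ 2 (px f) := contDiff_px hf
  rw [heatOp, pt_sub (differentiable_pt hf) ((differentiable_px hpx).const_smul ε),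
    pt_const_smul, pt_px_px_comm hf, heatOp]

theorem px_heatOp (ε : ℝ) (hf : ContDiff ℝ 3 f) : px (heatOp ε f) = heatOp ε (px f) := by
  have hpx : ContDiff ℝ 2 (px f) := contDiff_px hf
  rw [heatOp, px_sub (differentiable_pt hf) ((differentiable_px hpx).const_smul ε),
    px_const_smul, ← pt_px_comm hf, heatOp]

end HeatOperator

section Dispersive

variable {u : ℝ × ℝ → ℝ}

theorem contDiff_momentumPotential {m n : WithTop ℕ∞} (ρ D : ℝ) (hu : ContDiff ℝ n u)
    (hmn : m + 2 ≤ n := by norm_num) : ContDiff ℝ m (momentumPotential ρ D u) := by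
  have hmn' : m + 1 + 1 ≤ n := by rwa [add_assoc, one_add_one_eq_two]
  have hpx : ContDiff ℝ m (px (px u)) := contDiff_px (contDiff_px hu hmn') le_rfl
  exact (hpx.const_smul D).sub ((contDiff_pt hu (le_self_add.trans hmn')).const_smul ρ)

theorem pt_momentumPotential (ρ D : ℝ) (hu : ContDiff ℝ 3 u) :
    pt (momentumPotential ρ D u) = D • px (px (pt u)) - ρ • pt (pt u) := by
  have hpx : ContDiff ℝ 2 (px u) := contDiff_px hu
  rw [momentumPotential, pt_sub ((differentiable_px hpx).const_smul D)
    ((differentiable_pt hu).const_smul ρ), pt_const_smul, pt_const_smul, pt_px_px_comm hu]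

theorem px_px_momentumPotential (ρ D : ℝ) (hu : ContDiff ℝ 4 u) :
    px (px (momentumPotential ρ D u)) = D • px (px (px (px u))) - ρ • px (px (pt u)) := by
  have hpt : ContDiff ℝ 3 (pt u) := contDiff_pt hu
  have hpx : ContDiff ℝ 3 (px u) := contDiff_px hu
  have hpxx : ContDiff ℝ 2 (px (px u)) := contDiff_px hpx
  rw [momentumPotential, px_sub ((differentiable_px hpx).const_smul D)
    ((differentiable_pt hu).const_smul ρ), px_const_smul, px_const_smul,
    px_sub ((differentiable_px hpxx).const_smul D) ((differentiable_px hpt).const_smul ρ),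
    px_const_smul, px_const_smul]

theorem parabolicDispersiveOp_eq_sub_heatOp (ρ D K ε : ℝ) (hu : ContDiff ℝ 4 u) :
    parabolicDispersiveOp ρ D K ε u =
      (-K) • px (px u) - heatOp ε (momentumPotential ρ D u) := by
  have hu₃ : ContDiff ℝ 3 u := hu.of_le (by norm_num)
  ext p
  simp only [parabolicDispersiveOp, heatOp, pt_momentumPotential ρ D hu₃,
    px_px_momentumPotential ρ D hu, pt_px_px_comm hu₃, Pi.sub_apply, Pi.smul_apply, smul_eq_mul]
  ring

theorem pt_parabolicDispersiveOp (ρ D K ε : ℝ) (hu : ContDiff ℝ 5 u) :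
    pt (parabolicDispersiveOp ρ D K ε u) =
      (-K) • px (px (pt u)) - heatOp ε (pt (momentumPotential ρ D u)) := by
  have hpx : ContDiff ℝ 4 (px u) := contDiff_px hu
  have hw : ContDiff ℝ 3 (momentumPotential ρ D u) := contDiff_momentumPotential ρ D hu
  have hheat : ContDiff ℝ 1 (heatOp ε (momentumPotential ρ D u)) := contDiff_heatOp ε hw
  rw [parabolicDispersiveOp_eq_sub_heatOp ρ D K ε (hu.of_le (by norm_num)),
    pt_sub ((differentiable_px hpx).const_smul (-K)) (hheat.differentiable one_ne_zero),
    pt_const_smul, pt_px_px_comm hu, pt_heatOp ε hw]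

end Dispersive

theorem stmt15_general {ρ D K ε : ℝ} {u v π : ℝ × ℝ → ℝ}
    (hu : ContDiff ℝ 5 u) (hπ : ContDiff ℝ 3 π)
    (huv : ∀ p, pt u p = v p)
    (hmom : ∀ p, ρ * pt v p - D * px (px v) p + px π p = 0)
    (hconst : ∀ p, pt π p + K * px v p = ε * px (px π) p) (p : ℝ × ℝ) :
    pt (parabolicDispersiveOp ρ D K ε u) p = 0 := by
  obtain rfl : pt u = v := funext huv
  have hpotential : pt (momentumPotential ρ D u) = px π := by
    rw [pt_momentumPotential ρ D (hu.of_le (by norm_num))]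
    ext q
    simp only [Pi.sub_apply, Pi.smul_apply, smul_eq_mul]
    linarith [hmom q]
  have hheat : heatOp ε π = (-K) • px (pt u) := by
    ext q
    simp only [heatOp, Pi.sub_apply, Pi.smul_apply, smul_eq_mul]
    linarith [hconst q]
  rw [pt_parabolicDispersiveOp ρ D K ε hu, hpotential, ← px_heatOp ε hπ, hheat, px_const_smul,
    sub_self, Pi.zero_apply]

/-- If smooth `u, v, π` satisfy `∂ₜu = v`,
`ρ ∂ₜv − D ∂ₓ²v + ∂ₓπ = 0` and `(1/K)∂ₜπ + ∂ₓv = (1/H)∂ₓ²π` everywhere, then with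
`ε = K/H` the time derivative of the parabolic dispersive equation holds:
`∂ₜ[ρ ∂ₜ²u − (D + ερ) ∂ₜ∂ₓ²u − K ∂ₓ²u + εD ∂ₓ⁴u] = 0` everywhere. -/
theorem stmt15 (ρ D K H ε : ℝ) (hρ : 0 < ρ) (hD : 0 < D) (hK : 0 < K) (hH : 0 < H)
    (hε : ε = K / H)
    (u v π : ℝ × ℝ → ℝ)
    (hu : ContDiff ℝ (⊤ : ℕ∞) u) (hv : ContDiff ℝ (⊤ : ℕ∞) v) (hπ : ContDiff ℝ (⊤ : ℕ∞) π)
    (huv : ∀ p : ℝ × ℝ, pt u p = v p)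
    (hmom : ∀ p : ℝ × ℝ, ρ * pt v p - D * px (px v) p + px π p = 0)
    (hconst : ∀ p : ℝ × ℝ, (1 / K) * pt π p + px v p = (1 / H) * px (px π) p) :
    ∀ p : ℝ × ℝ,
      pt (fun q => ρ * pt (pt u) q - (D + ε * ρ) * pt (px (px u)) q
        - K * px (px u) q + ε * D * px (px (px (px u))) q) p = 0 := by
  refine stmt15_general (contDiff_infty.1 hu 5) (contDiff_infty.1 hπ 3) huv hmom fun p => ?_
  linear_combination K * hconst p - pt π p * mul_one_div_cancel hK.ne' - px (px π) p * hε
end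

section
/- Let ρ, K > 0, D ≥ 0, ε ≥ 0 and λ > 0 be real numbers, and assume K/ρ − (D − ερ)²/(4ρ²λ²) > 0. Let ω > 0 and γ ∈ ℝ. Then the Kramers–Kronig relations ρ(ω² − γ²) = K/λ² + εD/λ⁴ − (D + ερ)γ/λ² and 2ργ = (D + ερ)/λ² hold if and only if γ = (D + ερ)/(2ρλ²) and the phase velocity v = ωλ satisfies v = sqrt( K/ρ − (D − ερ)²/(4ρ²λ²) ). -/
/-!
Writing `a = ρ`, `b = (D + ερ)/λ²` and `c = K/λ² + εD/λ⁴`, the dispersion condition is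
`a w² - i b w - c = 0`. Substituting `γ = b/(2a)` from the second relation into the first
gives `ω² = c/a - b²/(4a²)`. Since `(D + ερ)² - 4ερD = (D - ερ)²`, multiplying by `λ²` turns
the right-hand side into the radicand, and `v ≥ 0` permits taking the square root.
-/

section Field

variable {F : Type*} [Field F] [NeZero (2 : F)]

theorem mul_sq_sub_sq_eq_and_two_mul_mul_eq_iff {a b c ω γ : F} (ha : a ≠ 0) :
    (a * (ω ^ 2 - γ ^ 2) = c - b * γ ∧ 2 * a * γ = b) ↔
      (γ = b / (2 * a) ∧ ω ^ 2 = c / a - b ^ 2 / (4 * a ^ 2)) := by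
  have h2a : 2 * a ≠ 0 := mul_ne_zero two_ne_zero ha
  have hγ : 2 * a * γ = b ↔ γ = b / (2 * a) := by
    rw [eq_div_iff h2a, mul_comm]
  rw [hγ, and_comm]
  refine and_congr_right fun hγ_eq => ?_
  have residual_eq :
      a * (ω ^ 2 - γ ^ 2) - (c - b * γ) = a * (ω ^ 2 - (c / a - b ^ 2 / (4 * a ^ 2))) := by
    have h4 : (4 : F) = 2 ^ 2 := by norm_num
    rw [hγ_eq, h4]
    field_simp
    ring
  rw [← sub_eq_zero, residual_eq, mul_eq_zero_iff_left ha, sub_eq_zero]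

theorem dispersion_frequency_sq_eq {ρ lam : F} (K D ε : F) (hρ : ρ ≠ 0) (hlam : lam ≠ 0) :
    (K / lam ^ 2 + ε * D / lam ^ 4) / ρ - ((D + ε * ρ) / lam ^ 2) ^ 2 / (4 * ρ ^ 2) =
      (K / ρ - (D - ε * ρ) ^ 2 / (4 * ρ ^ 2 * lam ^ 2)) / lam ^ 2 := by
  have h4 : (4 : F) = 2 ^ 2 := by norm_num
  rw [h4]
  field_simp
  ring

theorem kramers_kronig_iff_phase_velocity_sq {ρ K D ε lam ω γ : F}
    (hρ : ρ ≠ 0) (hlam : lam ≠ 0) :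
    (ρ * (ω ^ 2 - γ ^ 2) = K / lam ^ 2 + ε * D / lam ^ 4 - (D + ε * ρ) * γ / lam ^ 2
        ∧ 2 * ρ * γ = (D + ε * ρ) / lam ^ 2)
    ↔ (γ = (D + ε * ρ) / (2 * ρ * lam ^ 2)
        ∧ (ω * lam) ^ 2 = K / ρ - (D - ε * ρ) ^ 2 / (4 * ρ ^ 2 * lam ^ 2)) := by
  rw [mul_div_right_comm (D + ε * ρ) γ, mul_sq_sub_sq_eq_and_two_mul_mul_eq_iff hρ,
    dispersion_frequency_sq_eq K D ε hρ hlam, eq_div_iff (pow_ne_zero 2 hlam), ← mul_pow,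
    div_div, mul_comm (lam ^ 2)]

end Field

theorem stmt17_general (ρ K D ε lam ω γ : ℝ)
    (hρ : ρ ≠ 0) (hlam : lam ≠ 0)
    (hradicand : 0 ≤ K / ρ - (D - ε * ρ) ^ 2 / (4 * ρ ^ 2 * lam ^ 2))
    (hv : 0 ≤ ω * lam) :
    (ρ * (ω ^ 2 - γ ^ 2) = K / lam ^ 2 + ε * D / lam ^ 4 - (D + ε * ρ) * γ / lam ^ 2
        ∧ 2 * ρ * γ = (D + ε * ρ) / lam ^ 2)
    ↔ (γ = (D + ε * ρ) / (2 * ρ * lam ^ 2)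
        ∧ ω * lam = Real.sqrt (K / ρ - (D - ε * ρ) ^ 2 / (4 * ρ ^ 2 * lam ^ 2))) := by
  rw [kramers_kronig_iff_phase_velocity_sq hρ hlam, eq_comm (a := ω * lam),
    Real.sqrt_eq_iff_eq_sq hradicand hv, eq_comm (a := (ω * lam) ^ 2)]

/-- Under the positivity assumption, the Kramers–Kronig relations
`ρ(ω² − γ²) = K/λ² + εD/λ⁴ − (D + ερ)γ/λ²` and `2ργ = (D + ερ)/λ²` hold iff
`γ = (D + ερ)/(2ρλ²)` and the phase velocity `v = ωλ` equals
`sqrt(K/ρ − (D − ερ)²/(4ρ²λ²))`. -/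
theorem stmt17 (ρ K D ε lam ω γ : ℝ)
    (hρ : 0 < ρ) (hK : 0 < K) (hD : 0 ≤ D) (hε : 0 ≤ ε) (hlam : 0 < lam)
    (hpos : 0 < K / ρ - (D - ε * ρ) ^ 2 / (4 * ρ ^ 2 * lam ^ 2))
    (hω : 0 < ω) :
    (ρ * (ω ^ 2 - γ ^ 2) = K / lam ^ 2 + ε * D / lam ^ 4 - (D + ε * ρ) * γ / lam ^ 2
        ∧ 2 * ρ * γ = (D + ε * ρ) / lam ^ 2)
    ↔ (γ = (D + ε * ρ) / (2 * ρ * lam ^ 2)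
        ∧ ω * lam = Real.sqrt (K / ρ - (D - ε * ρ) ^ 2 / (4 * ρ ^ 2 * lam ^ 2))) :=
  stmt17_general ρ K D ε lam ω γ hρ.ne' hlam.ne' hpos.le (mul_pos hω hlam).le
end
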